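/- Let A_i ∈ ℝ^{m×d_i} and C_i ∈ ℝ^{p_i×d_i} for i = 1,…,n, with 𝐀 = diag(A₁,…,Aₙ), 𝐂 = diag(C₁,…,Cₙ), 𝐀' = (A₁ ⋯ Aₙ), and let W ∈ ℝ^{n×n} be a gossip matrix with 𝐖 = W ⊗ I_m. Suppose 𝐀' P_{ker 𝐂} = 0, where P_{ker 𝐂} is the orthogonal projector onto ker 𝐂. Set L_A = max_i σ_max²(A_i) (assume L_A > 0), L_S = (1/n)σ_max²(𝐀'), μ_W = λ_min+(W)², L_W = λ_max(W)², μ_C = σ_min+²(𝐂), L_C = σ_max²(𝐂), κ_W = L_W/μ_W, κ_C = L_C/μ_C, and choose α² = 2L_A/μ_W, β² = (L_S + 2L_A)/μ_C. Then the block matrix B = [[𝐀, α𝐖], [β𝐂, 0]] satisfies σ_min+²(B) ≥ L_A, and consequently κ_B = σ_max²(B)/σ_min+²(B) ≤ 1 + 2κ_W + 3κ_C. -/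

import Mathlib

/-!
Write `x = u + v` with `u = P x ∈ ker 𝐂` and `v ⊥ ker 𝐂`.

*Lower bound.* Let `(x, z) ⊥ ker B`. Since `0 × ker 𝐖 ⊆ ker B` and `𝐖` is symmetric,
`z = 𝐖 q` with `q ⊥ ker 𝐖`, so `μ_W ‖q‖² ≤ ‖z‖²`. As `𝐀' P = 0`, the vector `𝐀 u` is orthogonal to the consensus space, hence
`𝐀 u = 𝐖 q'`; then `(α u, -q') ∈ ker B`, and orthogonality to it reads `⟨𝐀 u, q⟩ = α ‖u‖²`.
Testing `𝐀 u + α 𝐖 z` against `q` gives `⟨𝐀 u + α 𝐖 z, q⟩ = α (‖u‖² + ‖z‖²)`, and Cauchy–Schwarz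
together with `α² μ_W = 2 L_A` yields `‖𝐀 u + α 𝐖 z‖² ≥ 2 L_A (‖u‖² + ‖z‖²)`
(`two_mul_le_of_test`). The term `𝐀 v` costs at most `L_A ‖v‖²` after halving, which is paid for by
`β² ‖𝐂 v‖² ≥ (L_S + 2 L_A) ‖v‖²`.

*Upper bound.* `[𝐀, α𝐖]` has squared norm at most `L_A + α² L_W` and `β𝐂` at most `β² L_C`;
moreover `L_S ≤ L_A`. Dividing by `σ_min+²(B) ≥ L_A` gives the bound on `κ_B`.
-/

open Matrix
open scoped BigOperators

noncomputable section

/-- Squared Euclidean norm of a vector. -/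
def sqnorm {ι : Type*} [Fintype ι] (v : ι → ℝ) : ℝ := ∑ i, (v i) ^ 2

/-- Squared largest singular value of a real matrix. -/
def sigmaMaxSq {ι κ : Type*} [Fintype ι] [Fintype κ] (M : Matrix ι κ ℝ) : ℝ :=
  sSup {r : ℝ | ∃ x : κ → ℝ, sqnorm x = 1 ∧ r = sqnorm (M.mulVec x)}

/-- Squared smallest positive singular value of a real matrix
(infimum of `‖Mx‖²` over unit vectors orthogonal to `ker M`). -/
def sigmaMinPosSq {ι κ : Type*} [Fintype ι] [Fintype κ] (M : Matrix ι κ ℝ) : ℝ :=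
  sInf {r : ℝ | ∃ x : κ → ℝ,
    (∀ y : κ → ℝ, M.mulVec y = 0 → x ⬝ᵥ y = 0) ∧ sqnorm x = 1 ∧ r = sqnorm (M.mulVec x)}

/-- Largest eigenvalue of a symmetric real matrix (Rayleigh quotient form). -/
def lamMax {ι : Type*} [Fintype ι] (M : Matrix ι ι ℝ) : ℝ :=
  sSup {r : ℝ | ∃ x : ι → ℝ, sqnorm x = 1 ∧ r = x ⬝ᵥ M.mulVec x}

/-- Smallest positive eigenvalue of a symmetric PSD real matrix (Rayleigh quotient
over unit vectors orthogonal to the kernel). -/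
def lamMinPos {ι : Type*} [Fintype ι] (M : Matrix ι ι ℝ) : ℝ :=
  sInf {r : ℝ | ∃ x : ι → ℝ,
    (∀ y : ι → ℝ, M.mulVec y = 0 → x ⬝ᵥ y = 0) ∧ sqnorm x = 1 ∧ r = x ⬝ᵥ M.mulVec x}

/-- Block-diagonal matrix `diag(A₁,…,Aₙ)` with row blocks of equal size `m`,
as a matrix from `ℝ^d = Σᵢ ℝ^{dᵢ}` to `(ℝ^m)^n`. -/
def blockDiagA {n m : ℕ} {d : Fin n → ℕ} (A : ∀ i, Matrix (Fin m) (Fin (d i)) ℝ) :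
    Matrix (Fin n × Fin m) ((i : Fin n) × Fin (d i)) ℝ :=
  Matrix.of fun p q => if p.1 = q.1 then A q.1 p.2 q.2 else 0

/-- Horizontal concatenation `(A₁ ⋯ Aₙ)`. -/
def hcat {n m : ℕ} {d : Fin n → ℕ} (A : ∀ i, Matrix (Fin m) (Fin (d i)) ℝ) :
    Matrix (Fin m) ((i : Fin n) × Fin (d i)) ℝ :=
  Matrix.of fun r q => A q.1 r q.2

/-- Kronecker product `W ⊗ I_m`, acting on `(ℝ^m)^n`. -/
def kronW (m : ℕ) {n : ℕ} (W : Matrix (Fin n) (Fin n) ℝ) :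
    Matrix (Fin n × Fin m) (Fin n × Fin m) ℝ :=
  Matrix.of fun p q => W p.1 q.1 * (if p.2 = q.2 then 1 else 0)

/-- Kronecker product `I_n ⊗ C`. -/
def kronIdC (n : ℕ) {p d : ℕ} (C : Matrix (Fin p) (Fin d) ℝ) :
    Matrix (Fin n × Fin p) (Fin n × Fin d) ℝ :=
  Matrix.of fun pq q => (if pq.1 = q.1 then (1 : ℝ) else 0) * C pq.2 q.2

/-- The orthogonal projector of `(ℝ^m)^n` onto the consensus subspace
`L_m = {(y₁,…,yₙ) : y₁ = ⋯ = yₙ}` (each block is replaced by the average). -/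
def consensusProj (n m : ℕ) : Matrix (Fin n × Fin m) (Fin n × Fin m) ℝ :=
  Matrix.of fun p q => (if p.2 = q.2 then (1 : ℝ) else 0) / n

/-! ### Squared norms and Cauchy–Schwarz -/

section Norms

variable {ι κ : Type*} [Fintype ι] [Fintype κ]

lemma sqnorm_eq_dot (v : ι → ℝ) : sqnorm v = v ⬝ᵥ v := by
  simp [sqnorm, dotProduct, sq]

lemma sqnorm_nonneg (v : ι → ℝ) : 0 ≤ sqnorm v :=
  Finset.sum_nonneg fun _ _ => sq_nonneg _

lemma sqnorm_smul (c : ℝ) (v : ι → ℝ) : sqnorm (c • v) = c ^ 2 * sqnorm v := by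
  simp [sqnorm, mul_pow, Finset.mul_sum]

lemma sqnorm_eq_zero {v : ι → ℝ} (h : sqnorm v = 0) : v = 0 := by
  rw [sqnorm_eq_dot] at h
  exact dotProduct_self_eq_zero.mp h

lemma sqnorm_add (v w : ι → ℝ) : sqnorm (v + w) = sqnorm v + 2 * (v ⬝ᵥ w) + sqnorm w := by
  simp only [sqnorm_eq_dot, add_dotProduct, dotProduct_add, dotProduct_comm w v]
  ring

lemma sqnorm_sumElim (a : ι → ℝ) (b : κ → ℝ) :
    sqnorm (Sum.elim a b) = sqnorm a + sqnorm b := by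
  simp [sqnorm]

lemma sqnorm_prod (z : ι × κ → ℝ) : sqnorm z = ∑ r, sqnorm fun i => z (i, r) := by
  simp only [sqnorm, Fintype.sum_prod_type]
  exact Finset.sum_comm

lemma dot_sq_le (v w : ι → ℝ) : (v ⬝ᵥ w) ^ 2 ≤ sqnorm v * sqnorm w :=
  Finset.sum_mul_sq_le_sq_mul_sq _ _ _

/-- A nonzero vector can be rescaled by some `c` to a unit vector `c • x`. -/
lemma exists_unit {x : ι → ℝ} (hx : x ≠ 0) :
    ∃ c : ℝ, 0 < c ^ 2 ∧ c ^ 2 * sqnorm x = 1 := by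
  have h : 0 < sqnorm x :=
    lt_of_le_of_ne (sqnorm_nonneg x) fun h => hx (sqnorm_eq_zero h.symm)
  refine ⟨(√(sqnorm x))⁻¹, by positivity, ?_⟩
  rw [inv_pow, Real.sq_sqrt h.le, inv_mul_cancel₀ h.ne']

lemma sqnorm_mulVec_le_frob (M : Matrix ι κ ℝ) (x : κ → ℝ) :
    sqnorm (M *ᵥ x) ≤ (∑ i, sqnorm (M i)) * sqnorm x := by
  rw [Finset.sum_mul]
  exact Finset.sum_le_sum fun i _ => dot_sq_le (M i) x

/-! ### The extremal quantities as quadratic bounds -/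

lemma sqnorm_mulVec_le (M : Matrix ι κ ℝ) (x : κ → ℝ) :
    sqnorm (M *ᵥ x) ≤ sigmaMaxSq M * sqnorm x := by
  by_cases hx : x = 0
  · subst hx; simp [sqnorm]
  obtain ⟨c, hc2, hc⟩ := exists_unit hx
  have hb : BddAbove {r : ℝ | ∃ x : κ → ℝ, sqnorm x = 1 ∧ r = sqnorm (M *ᵥ x)} := by
    refine ⟨∑ i, sqnorm (M i), ?_⟩
    rintro r ⟨y, hy, rfl⟩
    simpa [hy] using sqnorm_mulVec_le_frob M y
  have h := le_csSup hb ⟨c • x, by rw [sqnorm_smul, hc], rfl⟩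
  rw [mulVec_smul, sqnorm_smul] at h
  change _ ≤ sigmaMaxSq M at h
  refine le_of_mul_le_mul_left ?_ hc2
  calc c ^ 2 * sqnorm (M *ᵥ x) ≤ sigmaMaxSq M := h
    _ = c ^ 2 * (sigmaMaxSq M * sqnorm x) := by linear_combination -(sigmaMaxSq M) * hc

lemma sigmaMaxSq_nonneg (M : Matrix ι κ ℝ) : 0 ≤ sigmaMaxSq M := by
  refine Real.sSup_nonneg ?_
  rintro r ⟨y, _, rfl⟩
  exact sqnorm_nonneg _

lemma sigmaMaxSq_le (M : Matrix ι κ ℝ) {K : ℝ} (hK : 0 ≤ K)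
    (h : ∀ x, sqnorm (M *ᵥ x) ≤ K * sqnorm x) : sigmaMaxSq M ≤ K := by
  refine Real.sSup_le ?_ hK
  rintro r ⟨y, hy, rfl⟩
  simpa [hy] using h y

lemma sigmaMinPosSq_mul_le (M : Matrix ι κ ℝ) (x : κ → ℝ)
    (hx : ∀ y : κ → ℝ, M *ᵥ y = 0 → x ⬝ᵥ y = 0) :
    sigmaMinPosSq M * sqnorm x ≤ sqnorm (M *ᵥ x) := by
  by_cases hx0 : x = 0
  · subst hx0; simp [sqnorm]
  obtain ⟨c, hc2, hc⟩ := exists_unit hx0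
  have hb : BddBelow {r : ℝ | ∃ x : κ → ℝ,
      (∀ y : κ → ℝ, M *ᵥ y = 0 → x ⬝ᵥ y = 0) ∧ sqnorm x = 1 ∧ r = sqnorm (M *ᵥ x)} := by
    refine ⟨0, ?_⟩
    rintro r ⟨y, _, _, rfl⟩
    exact sqnorm_nonneg _
  have h := csInf_le hb ⟨c • x, fun y hy => by simp [smul_dotProduct, hx y hy],
    by rw [sqnorm_smul, hc], rfl⟩
  rw [mulVec_smul, sqnorm_smul] at h
  change sigmaMinPosSq M ≤ _ at h
  refine le_of_mul_le_mul_left ?_ hc2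
  calc c ^ 2 * (sigmaMinPosSq M * sqnorm x) = sigmaMinPosSq M := by
        linear_combination (sigmaMinPosSq M) * hc
    _ ≤ _ := h

lemma dot_mulVec_symm {M : Matrix ι ι ℝ} (hM : Mᵀ = M) (x y : ι → ℝ) :
    x ⬝ᵥ M *ᵥ y = (M *ᵥ x) ⬝ᵥ y := by
  rw [dotProduct_mulVec, ← mulVec_transpose, hM]

lemma lamMax_nonneg {M : Matrix ι ι ℝ} (hpsd : ∀ x : ι → ℝ, 0 ≤ x ⬝ᵥ M *ᵥ x) :
    0 ≤ lamMax M := by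
  refine Real.sSup_nonneg ?_
  rintro r ⟨y, _, rfl⟩
  exact hpsd y

lemma rayleigh_le_lamMax (M : Matrix ι ι ℝ) (x : ι → ℝ) :
    x ⬝ᵥ M *ᵥ x ≤ lamMax M * sqnorm x := by
  by_cases hx : x = 0
  · subst hx; simp [sqnorm]
  obtain ⟨c, hc2, hc⟩ := exists_unit hx
  have hb : BddAbove {r : ℝ | ∃ x : ι → ℝ, sqnorm x = 1 ∧ r = x ⬝ᵥ M *ᵥ x} := by
    refine ⟨1 + ∑ i, sqnorm (M i), ?_⟩
    rintro r ⟨y, hy, rfl⟩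
    have h1 := dot_sq_le y (M *ᵥ y)
    have h2 := sqnorm_mulVec_le_frob M y
    rw [hy] at h1 h2
    nlinarith [sq_nonneg (y ⬝ᵥ M *ᵥ y - 1)]
  have h := le_csSup hb ⟨c • x, by rw [sqnorm_smul, hc], rfl⟩
  rw [mulVec_smul, smul_dotProduct, dotProduct_smul, smul_eq_mul, smul_eq_mul] at h
  change _ ≤ lamMax M at h
  refine le_of_mul_le_mul_left ?_ hc2
  calc c ^ 2 * (x ⬝ᵥ M *ᵥ x) = c * (c * (x ⬝ᵥ M *ᵥ x)) := by ring
    _ ≤ lamMax M := h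
    _ = c ^ 2 * (lamMax M * sqnorm x) := by linear_combination -(lamMax M) * hc

/-- Cauchy–Schwarz for the semi-inner product of a positive semidefinite matrix. -/
lemma psd_cauchy_schwarz {M : Matrix ι ι ℝ} (hM : Mᵀ = M)
    (hpsd : ∀ x : ι → ℝ, 0 ≤ x ⬝ᵥ M *ᵥ x) (x y : ι → ℝ) :
    (x ⬝ᵥ M *ᵥ y) ^ 2 ≤ (x ⬝ᵥ M *ᵥ x) * (y ⬝ᵥ M *ᵥ y) := by
  have hs : y ⬝ᵥ M *ᵥ x = x ⬝ᵥ M *ᵥ y := by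
    rw [dot_mulVec_symm hM, dotProduct_comm]
  have h := discrim_le_zero (a := y ⬝ᵥ M *ᵥ y) (b := 2 * (x ⬝ᵥ M *ᵥ y))
    (c := x ⬝ᵥ M *ᵥ x) fun t => by
      have := hpsd (x + t • y)
      simp only [mulVec_add, mulVec_smul, dotProduct_add, add_dotProduct, smul_dotProduct,
        dotProduct_smul, smul_eq_mul, hs] at this
      linarith
  rw [discrim] at h
  nlinarith

/-- For a positive semidefinite matrix the largest eigenvalue is the operator norm. -/
lemma sqnorm_mulVec_le_lamMax {M : Matrix ι ι ℝ} (hM : Mᵀ = M)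
    (hpsd : ∀ x : ι → ℝ, 0 ≤ x ⬝ᵥ M *ᵥ x) (x : ι → ℝ) :
    sqnorm (M *ᵥ x) ≤ lamMax M ^ 2 * sqnorm x := by
  have h := psd_cauchy_schwarz hM hpsd (M *ᵥ x) x
  rw [← sqnorm_eq_dot] at h
  have h1 := rayleigh_le_lamMax M x
  have h2 := rayleigh_le_lamMax M (M *ᵥ x)
  have h3 := mul_le_mul h2 h1 (hpsd x)
    (mul_nonneg (lamMax_nonneg hpsd) (sqnorm_nonneg _))
  rcases (sqnorm_nonneg (M *ᵥ x)).lt_or_eq with h0 | h0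
  · refine le_of_mul_le_mul_left ?_ h0
    nlinarith
  · rw [← h0]
    exact mul_nonneg (sq_nonneg _) (sqnorm_nonneg _)

lemma lamMinPos_nonneg {M : Matrix ι ι ℝ} (hpsd : ∀ x : ι → ℝ, 0 ≤ x ⬝ᵥ M *ᵥ x) :
    0 ≤ lamMinPos M := by
  refine Real.sInf_nonneg ?_
  rintro r ⟨y, _, _, rfl⟩
  exact hpsd y

lemma lamMinPos_mul_le {M : Matrix ι ι ℝ} (hpsd : ∀ x : ι → ℝ, 0 ≤ x ⬝ᵥ M *ᵥ x)
    (x : ι → ℝ) (hx : ∀ y : ι → ℝ, M *ᵥ y = 0 → x ⬝ᵥ y = 0) :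
    lamMinPos M * sqnorm x ≤ x ⬝ᵥ M *ᵥ x := by
  by_cases hx0 : x = 0
  · subst hx0; simp [sqnorm]
  obtain ⟨c, hc2, hc⟩ := exists_unit hx0
  have hb : BddBelow {r : ℝ | ∃ x : ι → ℝ,
      (∀ y : ι → ℝ, M *ᵥ y = 0 → x ⬝ᵥ y = 0) ∧ sqnorm x = 1 ∧ r = x ⬝ᵥ M *ᵥ x} := by
    refine ⟨0, ?_⟩
    rintro r ⟨y, _, _, rfl⟩
    exact hpsd y
  have h := csInf_le hb ⟨c • x, fun y hy => by simp [smul_dotProduct, hx y hy],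
    by rw [sqnorm_smul, hc], rfl⟩
  rw [mulVec_smul, smul_dotProduct, dotProduct_smul, smul_eq_mul, smul_eq_mul] at h
  change lamMinPos M ≤ _ at h
  refine le_of_mul_le_mul_left ?_ hc2
  calc c ^ 2 * (lamMinPos M * sqnorm x) = lamMinPos M := by
        linear_combination (lamMinPos M) * hc
    _ ≤ c * (c * (x ⬝ᵥ M *ᵥ x)) := h
    _ = _ := by ring

lemma lamMinPos_sq_mul_le {M : Matrix ι ι ℝ} (hpsd : ∀ x : ι → ℝ, 0 ≤ x ⬝ᵥ M *ᵥ x)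
    (x : ι → ℝ) (hx : ∀ y : ι → ℝ, M *ᵥ y = 0 → x ⬝ᵥ y = 0) :
    lamMinPos M ^ 2 * sqnorm x ≤ sqnorm (M *ᵥ x) := by
  have h := lamMinPos_mul_le hpsd x hx
  have h0 := lamMinPos_nonneg hpsd
  have hcs := dot_sq_le x (M *ᵥ x)
  have h2 := pow_le_pow_left₀ (mul_nonneg h0 (sqnorm_nonneg x)) h 2
  rcases (sqnorm_nonneg x).lt_or_eq with hp | hp
  · refine le_of_mul_le_mul_left ?_ hp
    nlinarith
  · rw [← hp]
    simpa using sqnorm_nonneg _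

/-! ### Orthogonal decompositions with respect to the dot product -/

lemma exists_dot_decomp (S : Submodule ℝ (κ → ℝ)) (x : κ → ℝ) :
    ∃ a ∈ S, ∀ y ∈ S, (x - a) ⬝ᵥ y = 0 := by
  let T : Submodule ℝ (EuclideanSpace ℝ κ) :=
    S.comap (WithLp.linearEquiv 2 ℝ (κ → ℝ)).toLinearMap
  obtain ⟨a, ha, b, hb, hab⟩ := T.exists_add_mem_mem_orthogonal (WithLp.toLp 2 x)
  refine ⟨WithLp.ofLp a, ha, fun y hy => ?_⟩
  have h := (Submodule.mem_orthogonal T b).mp hb (WithLp.toLp 2 y) hy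
  have hx : x - WithLp.ofLp a = WithLp.ofLp b := by
    have := congrArg WithLp.ofLp hab
    simp only [WithLp.ofLp_add] at this
    rw [this]; simp
  rw [hx]
  simpa [PiLp.inner_apply, dotProduct] using h

lemma exists_ker_decomp {ι : Type*} (M : Matrix ι κ ℝ) (x : κ → ℝ) :
    ∃ a, M *ᵥ a = 0 ∧ ∀ y, M *ᵥ y = 0 → (x - a) ⬝ᵥ y = 0 := by
  obtain ⟨a, ha, h⟩ := exists_dot_decomp (LinearMap.ker M.mulVecLin) x
  exact ⟨a, by simpa using ha, fun y hy => h y (by simpa using hy)⟩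

/-- The range of a symmetric matrix is the orthogonal complement of its kernel, and preimages
can be chosen orthogonal to the kernel. -/
lemma exists_preimage {M : Matrix ι ι ℝ} (hM : Mᵀ = M) (z : ι → ℝ)
    (hz : ∀ y, M *ᵥ y = 0 → z ⬝ᵥ y = 0) :
    ∃ q, M *ᵥ q = z ∧ ∀ y, M *ᵥ y = 0 → q ⬝ᵥ y = 0 := by
  obtain ⟨a, ⟨w, hw⟩, h⟩ := exists_dot_decomp (LinearMap.range M.mulVecLin) z
  have hw' : M *ᵥ w = a := by simpa using hw
  have hb : M *ᵥ (z - a) = 0 := by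
    have h1 := h (M *ᵥ (M *ᵥ (z - a))) ⟨_, rfl⟩
    rw [dot_mulVec_symm hM] at h1
    exact dotProduct_self_eq_zero.mp h1
  have hza : z = a := by
    have h1 := hz _ hb
    have h2 := h a ⟨w, hw⟩
    rw [dotProduct_comm] at h2
    refine sub_eq_zero.mp (dotProduct_self_eq_zero.mp ?_)
    rw [sub_dotProduct, h1, h2, sub_zero]
  obtain ⟨k, hk, hk'⟩ := exists_ker_decomp M w
  exact ⟨w - k, by rw [mulVec_sub, hk, hw', hza, sub_zero], hk'⟩

/-- A quadratic lower bound on `(ker M)^⊥` bounds the smallest positive singular value; `M ≠ 0` is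
needed because the infimum over the empty set is `0`. -/
lemma le_sigmaMinPosSq (M : Matrix ι κ ℝ) {K : ℝ} {w : κ → ℝ} (hw : M *ᵥ w ≠ 0)
    (h : ∀ x, (∀ y, M *ᵥ y = 0 → x ⬝ᵥ y = 0) → K * sqnorm x ≤ sqnorm (M *ᵥ x)) :
    K ≤ sigmaMinPosSq M := by
  obtain ⟨a, ha, hperp⟩ := exists_ker_decomp M w
  have hne : w - a ≠ 0 := by
    intro h0
    rw [sub_eq_zero] at h0
    exact hw (h0 ▸ ha)
  obtain ⟨c, -, hc⟩ := exists_unit hne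
  refine le_csInf ⟨_, c • (w - a), fun y hy => by simp [smul_dotProduct, hperp y hy],
    by rw [sqnorm_smul, hc], rfl⟩ ?_
  rintro r ⟨y, hy, hy1, rfl⟩
  simpa [hy1] using h y hy

/-- The duality step of the lower bound: `s = 𝐀 u + α 𝐖 z` is tested against a preimage `q` of `z`
under `𝐖`, with `N = ‖u‖² + ‖z‖²` and `Z = ‖z‖²`. -/
lemma two_mul_le_of_test {s q : ι → ℝ} {α N μ L Z : ℝ} (hμ : 0 < μ)
    (hα : α ^ 2 * μ = 2 * L) (ht : s ⬝ᵥ q = α * N) (hq : μ * sqnorm q ≤ Z) (hZ : Z ≤ N) :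
    2 * L * N ≤ sqnorm s := by
  have hN : 0 ≤ N := le_trans (mul_nonneg hμ.le (sqnorm_nonneg q)) (hq.trans hZ)
  rcases hN.lt_or_eq with hp | hp
  · have h1 := dot_sq_le s q
    rw [ht] at h1
    have h2 : μ * (α * N) ^ 2 ≤ sqnorm s * N := by
      calc μ * (α * N) ^ 2 ≤ μ * (sqnorm s * sqnorm q) := mul_le_mul_of_nonneg_left h1 hμ.le
        _ = sqnorm s * (μ * sqnorm q) := by ring
        _ ≤ sqnorm s * N := mul_le_mul_of_nonneg_left (hq.trans hZ) (sqnorm_nonneg s)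
    refine le_of_mul_le_mul_right ?_ hp
    calc 2 * L * N * N = μ * (α * N) ^ 2 := by rw [← hα]; ring
      _ ≤ _ := h2
  · rw [← hp, mul_zero]
    exact sqnorm_nonneg s

/-- If `‖a‖² ≤ K X` and `‖b‖² ≤ L Z`, then `‖a + b‖² ≤ (K + L) (X + Z)`, by Cauchy–Schwarz in
`ℝ²`. -/
lemma sqnorm_add_le_of_le {a b : ι → ℝ} {K L X Z : ℝ} (hX : 0 ≤ X) (hZ : 0 ≤ Z) (hK : 0 ≤ K)
    (hL : 0 ≤ L) (ha : sqnorm a ≤ K * X) (hb : sqnorm b ≤ L * Z) :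
    sqnorm (a + b) ≤ (K + L) * (X + Z) := by
  have h1 : (a ⬝ᵥ b) ^ 2 ≤ (K * X) * (L * Z) :=
    (dot_sq_le a b).trans (mul_le_mul ha hb (sqnorm_nonneg b) (mul_nonneg hK hX))
  have h2 : 2 * (a ⬝ᵥ b) ≤ K * Z + L * X := by
    refine abs_le_of_sq_le_sq' ?_ (by positivity) |>.2
    nlinarith [sq_nonneg (K * Z - L * X)]
  rw [sqnorm_add]
  linarith

end Norms

/-! ### Block-diagonal, concatenated and Kronecker matrices -/

section Blocks

variable {n m : ℕ} {d : Fin n → ℕ}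

lemma blockDiagA_mulVec (A : ∀ i, Matrix (Fin m) (Fin (d i)) ℝ)
    (x : ((i : Fin n) × Fin (d i)) → ℝ) (i : Fin n) (r : Fin m) :
    (blockDiagA A *ᵥ x) (i, r) = (A i *ᵥ fun k => x ⟨i, k⟩) r := by
  simp only [mulVec, dotProduct, blockDiagA, of_apply, Fintype.sum_sigma]
  rw [Finset.sum_eq_single i]
  · simp
  · intro j _ hj
    simp [Ne.symm hj]
  · simp

lemma hcat_mulVec (A : ∀ i, Matrix (Fin m) (Fin (d i)) ℝ)
    (x : ((i : Fin n) × Fin (d i)) → ℝ) (r : Fin m) :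
    (hcat A *ᵥ x) r = ∑ i, (blockDiagA A *ᵥ x) (i, r) := by
  simp only [blockDiagA_mulVec]
  simp only [mulVec, dotProduct, hcat, of_apply, Fintype.sum_sigma]

lemma kronW_mulVec (W : Matrix (Fin n) (Fin n) ℝ) (z : Fin n × Fin m → ℝ)
    (i : Fin n) (r : Fin m) :
    (kronW m W *ᵥ z) (i, r) = (W *ᵥ fun j => z (j, r)) i := by
  simp [mulVec, dotProduct, kronW, Fintype.sum_prod_type]

lemma kronW_transpose {W : Matrix (Fin n) (Fin n) ℝ} (hW : Wᵀ = W) :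
    (kronW m W)ᵀ = kronW m W := by
  ext ⟨i, r⟩ ⟨j, s⟩
  have h : W j i = W i j := by rw [← Matrix.transpose_apply W i j, hW]
  simp [kronW, h, eq_comm]

lemma sqnorm_kronW_le {W : Matrix (Fin n) (Fin n) ℝ} (hW : Wᵀ = W)
    (hpsd : ∀ x : Fin n → ℝ, 0 ≤ x ⬝ᵥ W *ᵥ x) (z : Fin n × Fin m → ℝ) :
    sqnorm (kronW m W *ᵥ z) ≤ lamMax W ^ 2 * sqnorm z := by
  rw [sqnorm_prod, sqnorm_prod z, Finset.mul_sum]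
  refine Finset.sum_le_sum fun r _ => ?_
  simp only [kronW_mulVec]
  exact sqnorm_mulVec_le_lamMax hW hpsd _

/-- A vector of `(ℝ^m)^n` whose blocks sum to zero lies in the range of `W ⊗ I_m`, with a preimage
controlled by the smallest positive eigenvalue of `W`. -/
lemma exists_kronW_preimage {W : Matrix (Fin n) (Fin n) ℝ} (hW : Wᵀ = W)
    (hpsd : ∀ x : Fin n → ℝ, 0 ≤ x ⬝ᵥ W *ᵥ x)
    (hker : ∀ x : Fin n → ℝ, W *ᵥ x = 0 ↔ ∀ i j, x i = x j)
    (z : Fin n × Fin m → ℝ) (hz : ∀ r, ∑ i, z (i, r) = 0) :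
    ∃ q, kronW m W *ᵥ q = z ∧ lamMinPos W ^ 2 * sqnorm q ≤ sqnorm z := by
  have key : ∀ r : Fin m, ∃ q : Fin n → ℝ, W *ᵥ q = (fun i => z (i, r)) ∧
      ∀ y, W *ᵥ y = 0 → q ⬝ᵥ y = 0 := by
    intro r
    refine exists_preimage hW _ fun y hy => ?_
    have hy' := (hker y).mp hy
    rcases isEmpty_or_nonempty (Fin n) with h | ⟨⟨i₀⟩⟩
    · simp [dotProduct]
    · simp only [dotProduct]
      rw [Finset.sum_congr rfl fun i _ => by rw [hy' i i₀], ← Finset.sum_mul, hz r, zero_mul]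
  choose q hq hqp using key
  refine ⟨fun p => q p.2 p.1, ?_, ?_⟩
  · ext ⟨i, r⟩
    rw [kronW_mulVec]
    exact congrFun (hq r) i
  · rw [sqnorm_prod, sqnorm_prod z, Finset.mul_sum]
    refine Finset.sum_le_sum fun r _ => ?_
    rw [← hq r]
    exact lamMinPos_sq_mul_le hpsd _ (hqp r)

lemma sigmaMaxSq_block_le (A : ∀ i, Matrix (Fin m) (Fin (d i)) ℝ) (i : Fin n) :
    sigmaMaxSq (A i) ≤ ⨆ i, sigmaMaxSq (A i) :=
  le_ciSup (f := fun i => sigmaMaxSq (A i)) (Set.finite_range _).bddAbove i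

lemma sqnorm_blockDiagA_le (A : ∀ i, Matrix (Fin m) (Fin (d i)) ℝ)
    (x : ((i : Fin n) × Fin (d i)) → ℝ) :
    sqnorm (blockDiagA A *ᵥ x) ≤ (⨆ i, sigmaMaxSq (A i)) * sqnorm x := by
  have h1 : sqnorm (blockDiagA A *ᵥ x) = ∑ i, sqnorm (A i *ᵥ fun k => x ⟨i, k⟩) := by
    simp only [sqnorm, Fintype.sum_prod_type, blockDiagA_mulVec]
  have h2 : sqnorm x = ∑ i, sqnorm fun k => x ⟨i, k⟩ := by
    simp only [sqnorm, Fintype.sum_sigma]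
  rw [h1, h2, Finset.mul_sum]
  exact Finset.sum_le_sum fun i _ => (sqnorm_mulVec_le (A i) _).trans
    (mul_le_mul_of_nonneg_right (sigmaMaxSq_block_le A i) (sqnorm_nonneg _))

/-- `L_S ≤ L_A`: the squared norm of a sum of `n` vectors is at most `n` times the sum of the
squared norms. -/
lemma sigmaMaxSq_hcat_le (A : ∀ i, Matrix (Fin m) (Fin (d i)) ℝ)
    (hA : 0 ≤ ⨆ i, sigmaMaxSq (A i)) :
    1 / (n : ℝ) * sigmaMaxSq (hcat A) ≤ ⨆ i, sigmaMaxSq (A i) := by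
  have h : sigmaMaxSq (hcat A) ≤ n * ⨆ i, sigmaMaxSq (A i) := by
    refine sigmaMaxSq_le _ (by positivity) fun x => ?_
    have h1 : sqnorm (hcat A *ᵥ x) ≤ n * sqnorm (blockDiagA A *ᵥ x) := by
      rw [sqnorm_prod, Finset.mul_sum]
      refine Finset.sum_le_sum fun r _ => ?_
      rw [hcat_mulVec]
      simpa [sqnorm] using
        sq_sum_le_card_mul_sum_sq (s := Finset.univ) (f := fun i => (blockDiagA A *ᵥ x) (i, r))
    rw [mul_assoc]
    exact h1.trans (mul_le_mul_of_nonneg_left (sqnorm_blockDiagA_le A x) (Nat.cast_nonneg n))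
  rcases Nat.eq_zero_or_pos n with hn | hn
  · simpa [hn] using hA
  · rw [one_div, inv_mul_le_iff₀ (by exact_mod_cast hn)]
    exact h

end Blocks

/-! ### The coupled block matrix -/

/-- when `𝐀' P_{ker 𝐂} = 0`, the block matrix `B = [[𝐀, α𝐖], [β𝐂, 0]]`
satisfies `σ_min+²(B) ≥ L_A` and `κ_B ≤ 1 + 2κ_W + 3κ_C`. -/
theorem coupled_local_cond_degenerate {n m : ℕ} (d p : Fin n → ℕ)
    (A : ∀ i : Fin n, Matrix (Fin m) (Fin (d i)) ℝ)
    (C : ∀ i : Fin n, Matrix (Fin (p i)) (Fin (d i)) ℝ)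
    -- W is a gossip matrix
    (W : Matrix (Fin n) (Fin n) ℝ)
    (hW_symm : Wᵀ = W)
    (hW_psd : ∀ x : Fin n → ℝ, 0 ≤ x ⬝ᵥ W.mulVec x)
    (hW_ker : ∀ x : Fin n → ℝ, W.mulVec x = 0 ↔ ∀ i j, x i = x j)
    -- P is the orthogonal projector onto ker 𝐂
    (P : Matrix ((i : Fin n) × Fin (d i)) ((i : Fin n) × Fin (d i)) ℝ)
    (hP_symm : Pᵀ = P)
    (hP_ker : ∀ x, (Matrix.blockDiagonal' C).mulVec (P.mulVec x) = 0)
    (hP_fix : ∀ x, (Matrix.blockDiagonal' C).mulVec x = 0 → P.mulVec x = x)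
    -- 𝐀' P_{ker 𝐂} = 0
    (hAP : hcat A * P = 0)
    (LA : ℝ) (hLA : LA = ⨆ i, sigmaMaxSq (A i)) (hLA_pos : 0 < LA)
    (LS : ℝ) (hLS : LS = 1 / (n : ℝ) * sigmaMaxSq (hcat A))
    (μW LW : ℝ) (hμW : μW = lamMinPos W ^ 2) (hLW : LW = lamMax W ^ 2) (hμW_pos : 0 < μW)
    (μC LC : ℝ) (hμC : μC = sigmaMinPosSq (Matrix.blockDiagonal' C))
    (hLC : LC = sigmaMaxSq (Matrix.blockDiagonal' C)) (hμC_pos : 0 < μC)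
    (κW κC : ℝ) (hκW : κW = LW / μW) (hκC : κC = LC / μC)
    (α β : ℝ) (hα : α ^ 2 = 2 * LA / μW) (hβ : β ^ 2 = (LS + 2 * LA) / μC)
    (B : Matrix ((Fin n × Fin m) ⊕ ((i : Fin n) × Fin (p i)))
      (((i : Fin n) × Fin (d i)) ⊕ (Fin n × Fin m)) ℝ)
    (hB : B = Matrix.fromBlocks (blockDiagA A) (α • kronW m W)
      (β • Matrix.blockDiagonal' C) 0) :
    LA ≤ sigmaMinPosSq B ∧
    sigmaMaxSq B / sigmaMinPosSq B ≤ 1 + 2 * κW + 3 * κC := by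
  set bA := blockDiagA A with hbA
  set bC := Matrix.blockDiagonal' C with hbC
  set bW := kronW m W with hbW
  have hAle : ∀ x, sqnorm (bA *ᵥ x) ≤ LA * sqnorm x := fun x => by
    rw [hLA]; exact sqnorm_blockDiagA_le A x
  have hLS0 : 0 ≤ LS := by
    rw [hLS]; exact mul_nonneg (by positivity) (sigmaMaxSq_nonneg _)
  have hLSA : LS ≤ LA := by
    rw [hLS, hLA]; exact sigmaMaxSq_hcat_le A (hLA ▸ hLA_pos.le)
  have hα' : α ^ 2 * μW = 2 * LA := by rw [hα]; field_simp
  have hβ' : β ^ 2 * μC = LS + 2 * LA := by rw [hβ]; field_simp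
  have hBmul : ∀ x z, B *ᵥ Sum.elim x z =
      Sum.elim (bA *ᵥ x + α • (bW *ᵥ z)) (β • (bC *ᵥ x)) := fun x z => by
    rw [hB, fromBlocks_mulVec]
    simp [smul_mulVec]
  have hBsq : ∀ x z, sqnorm (B *ᵥ Sum.elim x z) =
      sqnorm (bA *ᵥ x + α • (bW *ᵥ z)) + β ^ 2 * sqnorm (bC *ᵥ x) := fun x z => by
    rw [hBmul, sqnorm_sumElim, sqnorm_smul]
  have hWsymm : bWᵀ = bW := kronW_transpose hW_symm
  have hlow : LA ≤ sigmaMinPosSq B := by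
    -- `L_A > 0` forces `bA ≠ 0`, hence `B ≠ 0`.
    obtain ⟨w, hw⟩ : ∃ w, bA *ᵥ w ≠ 0 := by
      by_contra! h
      have hzero : ∀ i, sigmaMaxSq (A i) ≤ 0 := fun i => by
        refine sigmaMaxSq_le _ le_rfl fun y => ?_
        have h0 : A i *ᵥ y = 0 := by
          ext r
          have h1 := congrFun (h fun s => if hs : s.1 = i then y (hs ▸ s.2) else 0) (i, r)
          rw [hbA, blockDiagA_mulVec] at h1
          simpa using h1
        simp [h0, sqnorm]
      have : LA ≤ 0 := by rw [hLA]; exact Real.iSup_le hzero le_rfl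
      linarith
    refine le_sigmaMinPosSq B (w := Sum.elim w 0) ?_ ?_
    · intro h
      rw [hBmul] at h
      refine hw (funext fun i => ?_)
      simpa using congrFun h (Sum.inl i)
    intro X hX
    obtain ⟨x, z, rfl⟩ : ∃ x z, X = Sum.elim x z :=
      ⟨_, _, (Sum.elim_comp_inl_inr X).symm⟩
    set u := P *ᵥ x with hu
    set v := x - u with hv
    have hxuv : x = u + v := by rw [hv]; abel
    have hCu : bC *ᵥ u = 0 := hP_ker x
    have hvperp : ∀ y, bC *ᵥ y = 0 → v ⬝ᵥ y = 0 := fun y hy => by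
      rw [← hP_fix y hy, dot_mulVec_symm hP_symm, hv, mulVec_sub, hP_fix u hCu, hu, sub_self,
        zero_dotProduct]
    have hvu : v ⬝ᵥ u = 0 := hvperp u hCu
    -- `z` is orthogonal to the consensus space, which embeds into `ker B`.
    have hzsum : ∀ r, ∑ i, z (i, r) = 0 := fun r => by
      have hk : bW *ᵥ (fun p => if p.2 = r then 1 else 0) = 0 := by
        ext ⟨i, s⟩
        rw [hbW, kronW_mulVec]
        exact congrFun ((hW_ker _).mpr fun _ _ => rfl) i
      have h := hX (Sum.elim 0 fun p => if p.2 = r then 1 else 0) (by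
        rw [hBmul, hk]; simp)
      rw [sumElim_dotProduct_sumElim] at h
      simpa [dotProduct, Fintype.sum_prod_type] using h
    have hAusum : ∀ r, ∑ i, (bA *ᵥ u) (i, r) = 0 := fun r => by
      rw [hbA, ← hcat_mulVec, hu, mulVec_mulVec, hAP, zero_mulVec, Pi.zero_apply]
    obtain ⟨q, hq, hqle⟩ := exists_kronW_preimage hW_symm hW_psd hW_ker z hzsum
    obtain ⟨q', hq', -⟩ := exists_kronW_preimage hW_symm hW_psd hW_ker (bA *ᵥ u) hAusum
    rw [← hbW] at hq hq'
    rw [← hμW] at hqle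
    have hAuq : (bA *ᵥ u) ⬝ᵥ q = α * sqnorm u := by
      have h := hX (Sum.elim (α • u) (-q')) (by
        rw [hBmul, mulVec_neg, hq', mulVec_smul, mulVec_smul, hCu]; simp)
      rw [sumElim_dotProduct_sumElim, dotProduct_smul, dotProduct_neg, hxuv, add_dotProduct, hvu,
        ← hq, ← dot_mulVec_symm hWsymm, hq', ← sqnorm_eq_dot, smul_eq_mul,
        dotProduct_comm] at h
      linarith
    have htest : (bA *ᵥ u + α • (bW *ᵥ z)) ⬝ᵥ q = α * (sqnorm u + sqnorm z) := by
      rw [add_dotProduct, hAuq, smul_dotProduct, ← dot_mulVec_symm hWsymm, hq, ← sqnorm_eq_dot,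
        smul_eq_mul]
      ring
    have hs := two_mul_le_of_test hμW_pos hα' htest hqle
      (le_add_of_nonneg_left (sqnorm_nonneg u))
    set s := bA *ᵥ u + α • (bW *ᵥ z) with hsdef
    have hsplit : bA *ᵥ x + α • (bW *ᵥ z) = s + bA *ᵥ v := by
      rw [hxuv, mulVec_add, hsdef]; abel
    have hCx : bC *ᵥ x = bC *ᵥ v := by rw [hxuv, mulVec_add, hCu, zero_add]
    have hCv : μC * sqnorm v ≤ sqnorm (bC *ᵥ v) := by
      rw [hμC]; exact sigmaMinPosSq_mul_le bC v hvperp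
    have hCv' : (LS + 2 * LA) * sqnorm v ≤ β ^ 2 * sqnorm (bC *ᵥ v) := by
      rw [← hβ', mul_assoc]
      exact mul_le_mul_of_nonneg_left hCv (sq_nonneg β)
    -- `‖s‖² ≤ 2 ‖s + bA v‖² + 2 ‖bA v‖²`, since `‖s + 2bA v‖² ≥ 0`.
    have hyoung : sqnorm s ≤ 2 * sqnorm (s + bA *ᵥ v) + 2 * sqnorm (bA *ᵥ v) := by
      have h := sqnorm_nonneg (s + (2 : ℝ) • (bA *ᵥ v))
      rw [sqnorm_add, sqnorm_smul, dotProduct_smul, smul_eq_mul] at h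
      rw [sqnorm_add s]
      linarith
    have hx2 : sqnorm x = sqnorm u + sqnorm v := by
      rw [hxuv, sqnorm_add, dotProduct_comm, hvu]; ring
    rw [hBsq, sqnorm_sumElim, hsplit, hCx, hx2]
    have := hAle v
    have := mul_nonneg hLS0 (sqnorm_nonneg v)
    linarith
  refine ⟨hlow, ?_⟩
  have hLW0 : 0 ≤ LW := by rw [hLW]; positivity
  have hLC0 : 0 ≤ LC := by rw [hLC]; exact sigmaMaxSq_nonneg _
  have hκW0 : 0 ≤ κW := by rw [hκW]; positivity
  have hκC0 : 0 ≤ κC := by rw [hκC]; positivity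
  have hupper : sigmaMaxSq B ≤ LA * (1 + 2 * κW + 3 * κC) := by
    have e1 : α ^ 2 * LW = LA * (2 * κW) := by rw [hα, hκW]; ring
    have e2 : β ^ 2 * LC ≤ LA * (3 * κC) := by
      have : β ^ 2 * LC = (LS + 2 * LA) * κC := by rw [hβ, hκC]; ring
      rw [this]
      nlinarith
    refine sigmaMaxSq_le B (by positivity) fun X => ?_
    obtain ⟨x, z, rfl⟩ : ∃ x z, X = Sum.elim x z :=
      ⟨_, _, (Sum.elim_comp_inl_inr X).symm⟩
    have hx0 := sqnorm_nonneg x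
    have hz0 := sqnorm_nonneg z
    have hA := hAle x
    have hWz : sqnorm (α • (bW *ᵥ z)) ≤ LA * (2 * κW) * sqnorm z := by
      rw [sqnorm_smul, ← e1, hLW, mul_assoc]
      exact mul_le_mul_of_nonneg_left (sqnorm_kronW_le hW_symm hW_psd z) (sq_nonneg α)
    have hC : β ^ 2 * sqnorm (bC *ᵥ x) ≤ LA * (3 * κC) * sqnorm x := by
      have h1 : sqnorm (bC *ᵥ x) ≤ LC * sqnorm x := by
        rw [hLC]; exact sqnorm_mulVec_le bC x
      calc _ ≤ β ^ 2 * (LC * sqnorm x) := mul_le_mul_of_nonneg_left h1 (sq_nonneg β)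
        _ = β ^ 2 * LC * sqnorm x := by ring
        _ ≤ _ := mul_le_mul_of_nonneg_right e2 hx0
    have hsum := sqnorm_add_le_of_le hx0 hz0 hLA_pos.le
      (show 0 ≤ LA * (2 * κW) by positivity) hA hWz
    rw [hBsq, sqnorm_sumElim]
    have : 0 ≤ LA * (3 * κC) * sqnorm z := by positivity
    linarith
  have hpos : 0 < sigmaMinPosSq B := hLA_pos.trans_le hlow
  rw [div_le_iff₀ hpos, mul_comm]
  exact hupper.trans (mul_le_mul_of_nonneg_right hlow (by positivity))
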